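/- In the 4-point/2-point example, define f = |μ_1 α_{12} + μ_3 α_{32} − μ_2 s| + |μ_1 α_{14} + μ_3 α_{34} − μ_4 s| + |μ_2 α_{21} + μ_4 α_{41} − μ_1 r| + |μ_2 α_{23} + μ_4 α_{43} − μ_3 r|. Then for every transport plan ω from (4, α, μ) to (2, β, ν), f ≤ 4(1 + |1 − r − s|) · I(ω), where I(ω) = ω_{21} + ω_{41} + ω_{12} + ω_{32}. -/

import Mathlib

/-- A classical system: a row-stochastic matrix α with strictly positive invariant
probability vector μ. -/
def IsClassicalSystem {m : ℕ} (α : Fin m → Fin m → ℝ) (μ : Fin m → ℝ) : Prop :=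
  (∀ p q, 0 ≤ α p q) ∧ (∀ p, ∑ q, α p q = 1) ∧
  (∀ p, 0 < μ p) ∧ (∑ p, μ p = 1) ∧ (∀ q, ∑ p, μ p * α p q = μ q)

/-- A coupling of the probability vectors μ and ν. -/
def IsCoupling {m n : ℕ} (μ : Fin m → ℝ) (ν : Fin n → ℝ) (ω : Fin m → Fin n → ℝ) : Prop :=
  (∀ p r, 0 ≤ ω p r) ∧ (∀ p, ∑ r, ω p r = μ p) ∧ (∀ r, ∑ p, ω p r = ν r)

/-- A transport plan from the system (m, α, μ) to the system (n, β, ν): a coupling ω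
satisfying Σ_p ω_{pr} α_{pq} = Σ_s ω_{qs} (ν_r/ν_s) β_{rs} for all q, r. -/
def IsTransportPlan {m n : ℕ} (α : Fin m → Fin m → ℝ) (μ : Fin m → ℝ)
    (β : Fin n → Fin n → ℝ) (ν : Fin n → ℝ) (ω : Fin m → Fin n → ℝ) : Prop :=
  IsCoupling μ ν ω ∧
    ∀ (q : Fin m) (r : Fin n), ∑ p, ω p r * α p q = ∑ s, ω q s * (ν r / ν s * β r s)

/-- The quadratic transport cost of a coupling ω relative to the coordinates k and l. -/
def transportCost {d m n : ℕ} (k : Fin d → Fin m → ℝ) (l : Fin d → Fin n → ℝ)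
    (ω : Fin m → Fin n → ℝ) : ℝ :=
  ∑ i, ∑ p, ∑ r, ω p r * (k i p - l i r) ^ 2

/-- The Wasserstein distance from (m, α, μ) with coordinates k to (n, β, ν) with
coordinates l. -/
noncomputable def Wdist {d m n : ℕ} (α : Fin m → Fin m → ℝ) (μ : Fin m → ℝ)
    (β : Fin n → Fin n → ℝ) (ν : Fin n → ℝ)
    (k : Fin d → Fin m → ℝ) (l : Fin d → Fin n → ℝ) : ℝ :=
  sInf {x | ∃ ω, IsTransportPlan α μ β ν ω ∧ x = Real.sqrt (transportCost k l ω)}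

/-!
Label each point `p` of the first system by a point `c p` of the second. A transport plan `ω` is
compared with the ideal plan moving all of `μ p` to `c p`: every entry of row `p` differs from its
ideal value by at most the mass that `ω` moves from `p` to points other than `c p`. Replacing `ω` by
the ideal plan in the balance equation for `q` therefore costs, on the side of `α`, the misplaced
masses averaged with the weights `α p q`, which sum to at most one over `q`, and, on the side of the
time reversal of `β`, the misplaced mass at `q` times the oscillation of a column. For two points
this oscillation is `|1 - r - s|`, so the deviation is at most `(1 + |1 - r - s|)` times the cost.
-/

section MisplacedMass

variable {ι κ : Type*} [Fintype κ] [DecidableEq κ]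

/-- The mass that a plan `ω` moves from `p` to points other than the one assigned to `p` by the
labelling `c`. For the labelling `![0, 1, 0, 1]`, its sum over `p` is the cost `I(ω)`. -/
def misplacedMass (c : ι → κ) (ω : ι → κ → ℝ) (p : ι) : ℝ :=
  ∑ j with j ≠ c p, ω p j

lemma misplacedMass_nonneg {ω : ι → κ → ℝ} (hω : ∀ p j, 0 ≤ ω p j) (c : ι → κ) (p : ι) :
    0 ≤ misplacedMass c ω p :=
  Finset.sum_nonneg fun j _ ↦ hω p j

lemma le_misplacedMass {ω : ι → κ → ℝ} (hω : ∀ p j, 0 ≤ ω p j) {c : ι → κ} {p : ι} {j : κ}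
    (hj : j ≠ c p) : ω p j ≤ misplacedMass c ω p :=
  Finset.single_le_sum (fun i _ ↦ hω p i) (Finset.mem_filter.2 ⟨Finset.mem_univ j, hj⟩)

lemma add_misplacedMass (c : ι → κ) (ω : ι → κ → ℝ) (p : ι) :
    ω p (c p) + misplacedMass c ω p = ∑ j, ω p j := by
  rw [misplacedMass, Finset.filter_ne', Finset.add_sum_erase _ _ (Finset.mem_univ _)]

end MisplacedMass

/-- The time reversal of the transition matrix `β` with respect to `ν`, which is the matrix on the
right-hand side of the balance equation in `IsTransportPlan`. -/
noncomputable def timeReversal {κ : Type*} (β : κ → κ → ℝ) (ν : κ → ℝ) (i j : κ) : ℝ :=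
  ν j / ν i * β j i

lemma timeReversal_eq_of_detailedBalance {κ : Type*} {β : κ → κ → ℝ} {ν : κ → ℝ} {i j : κ}
    (hν : ν i ≠ 0) (h : ν i * β i j = ν j * β j i) : timeReversal β ν i j = β i j := by
  rw [timeReversal, div_mul_eq_mul_div, ← h, mul_div_cancel_left₀ _ hν]

section Labelling

variable {m n : ℕ} {α : Fin m → Fin m → ℝ} {μ : Fin m → ℝ} {β : Fin n → Fin n → ℝ}
  {ν : Fin n → ℝ} {ω : Fin m → Fin n → ℝ}

namespace IsCoupling

lemma abs_ite_sub_le_misplacedMass (hω : IsCoupling μ ν ω) (c : Fin m → Fin n) (p : Fin m)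
    (j : Fin n) : |(if c p = j then μ p else 0) - ω p j| ≤ misplacedMass c ω p := by
  obtain ⟨hω_nonneg, hω_row, -⟩ := hω
  split_ifs with hj
  · subst hj
    rw [← hω_row, ← add_misplacedMass c ω p, add_sub_cancel_left,
      abs_of_nonneg (misplacedMass_nonneg hω_nonneg c p)]
  · rw [zero_sub, abs_neg, abs_of_nonneg (hω_nonneg p j)]
    exact le_misplacedMass hω_nonneg (Ne.symm hj)

lemma abs_inflow_sub_le (hω : IsCoupling μ ν ω) (c : Fin m → Fin n) (j : Fin n) {a : Fin m → ℝ}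
    (ha : ∀ p, 0 ≤ a p) :
    |∑ p with c p = j, μ p * a p - ∑ p, ω p j * a p| ≤ ∑ p, misplacedMass c ω p * a p := by
  calc |∑ p with c p = j, μ p * a p - ∑ p, ω p j * a p|
    _ = |∑ p, ((if c p = j then μ p else 0) - ω p j) * a p| := by
        simp only [Finset.sum_filter, ← Finset.sum_sub_distrib, sub_mul, ite_mul, zero_mul]
    _ ≤ ∑ p, |(if c p = j then μ p else 0) - ω p j| * a p := by
        simpa only [abs_mul, abs_of_nonneg (ha _)] using Finset.abs_sum_le_sum_abs
          (fun p ↦ ((if c p = j then μ p else 0) - ω p j) * a p) Finset.univ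
    _ ≤ ∑ p, misplacedMass c ω p * a p := by
        gcongr with p
        · exact ha p
        · exact hω.abs_ite_sub_le_misplacedMass c p j

lemma sum_abs_inflow_sub_le (hω : IsCoupling μ ν ω) (hα : ∀ p q, 0 ≤ α p q)
    (hα_row : ∀ p, ∑ q, α p q ≤ 1) (c k : Fin m → Fin n) :
    ∑ q, |∑ p with c p = k q, μ p * α p q - ∑ p, ω p (k q) * α p q| ≤
      ∑ p, misplacedMass c ω p := by
  calc ∑ q, |∑ p with c p = k q, μ p * α p q - ∑ p, ω p (k q) * α p q|
    _ ≤ ∑ q, ∑ p, misplacedMass c ω p * α p q :=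
        Finset.sum_le_sum fun q _ ↦ hω.abs_inflow_sub_le c (k q) fun p ↦ hα p q
    _ = ∑ p, misplacedMass c ω p * ∑ q, α p q := by
        rw [Finset.sum_comm]
        simp only [Finset.mul_sum]
    _ ≤ ∑ p, misplacedMass c ω p :=
        Finset.sum_le_sum fun p _ ↦
          mul_le_of_le_one_right (misplacedMass_nonneg hω.1 c p) (hα_row p)

lemma abs_sum_mul_sub_le (hω : IsCoupling μ ν ω) (c : Fin m → Fin n) (q : Fin m)
    {f : Fin n → ℝ} {δ : ℝ} (hf : ∀ j, |f j - f (c q)| ≤ δ) :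
    |∑ j, ω q j * f j - μ q * f (c q)| ≤ δ * misplacedMass c ω q := by
  calc |∑ j, ω q j * f j - μ q * f (c q)|
    _ = |∑ j with j ≠ c q, ω q j * (f j - f (c q))| := by
        rw [Finset.sum_filter_of_ne fun j _ hj ↦ ?_]
        · rw [← hω.2.1 q, Finset.sum_mul, ← Finset.sum_sub_distrib]
          simp only [mul_sub]
        · rintro rfl
          exact hj (by rw [sub_self, mul_zero])
    _ ≤ ∑ j with j ≠ c q, |ω q j * (f j - f (c q))| := Finset.abs_sum_le_sum_abs _ _
    _ ≤ ∑ j with j ≠ c q, δ * ω q j := by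
        gcongr with j
        rw [abs_mul, abs_of_nonneg (hω.1 q j), mul_comm]
        exact mul_le_mul_of_nonneg_right (hf j) (hω.1 q j)
    _ = δ * misplacedMass c ω q := by rw [misplacedMass, Finset.mul_sum]

end IsCoupling

theorem IsTransportPlan.sum_abs_inflow_sub_timeReversal_le (hω : IsTransportPlan α μ β ν ω)
    (hα : ∀ p q, 0 ≤ α p q) (hα_row : ∀ p, ∑ q, α p q ≤ 1) (c k : Fin m → Fin n) {δ : ℝ}
    (hδ : ∀ q i, |timeReversal β ν i (k q) - timeReversal β ν (c q) (k q)| ≤ δ) :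
    ∑ q, |∑ p with c p = k q, μ p * α p q - μ q * timeReversal β ν (c q) (k q)| ≤
      (1 + δ) * ∑ p, misplacedMass c ω p := by
  obtain ⟨hω_coupling, hω_balance⟩ := hω
  have outflow_le (q : Fin m) :
      |∑ p, ω p (k q) * α p q - μ q * timeReversal β ν (c q) (k q)| ≤
        δ * misplacedMass c ω q := by
    rw [hω_balance q (k q)]
    exact hω_coupling.abs_sum_mul_sub_le c q (f := (timeReversal β ν · (k q))) (hδ q)
  calc ∑ q, |∑ p with c p = k q, μ p * α p q - μ q * timeReversal β ν (c q) (k q)|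
    _ ≤ ∑ q, (|∑ p with c p = k q, μ p * α p q - ∑ p, ω p (k q) * α p q| +
          δ * misplacedMass c ω q) :=
        Finset.sum_le_sum fun q _ ↦
          (abs_sub_le _ _ _).trans (add_le_add_right (outflow_le q) _)
    _ ≤ (1 + δ) * ∑ p, misplacedMass c ω p := by
        rw [Finset.sum_add_distrib, ← Finset.mul_sum, one_add_mul]
        exact add_le_add_left (hω_coupling.sum_abs_inflow_sub_le hα hα_row c k) _

end Labelling

section TwoPoints

variable {m : ℕ} {α : Fin m → Fin m → ℝ} {μ : Fin m → ℝ} {r s : ℝ} {ν : Fin 2 → ℝ}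
  {ω : Fin m → Fin 2 → ℝ}

lemma timeReversal_twoPoint (hν : ∀ i, ν i ≠ 0) (hdb : ν 0 * r = ν 1 * s) :
    timeReversal ![![1 - r, r], ![s, 1 - s]] ν = ![![1 - r, r], ![s, 1 - s]] := by
  ext i j
  refine timeReversal_eq_of_detailedBalance (hν i) ?_
  fin_cases i <;> fin_cases j <;> simp [hdb]

lemma abs_twoPoint_sub_le (r s : ℝ) (i i' j : Fin 2) :
    |![![1 - r, r], ![s, 1 - s]] i j - ![![1 - r, r], ![s, 1 - s]] i' j| ≤ |1 - r - s| := by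
  have h : |r - (1 - s)| = |1 - r - s| := by rw [abs_sub_comm, sub_right_comm]
  fin_cases i <;> fin_cases i' <;> fin_cases j <;>
    simp [h, abs_sub_comm s, abs_sub_comm (1 - s)]

theorem stmt_12_general (hα : ∀ p q, 0 ≤ α p q) (hα_row : ∀ p, ∑ q, α p q ≤ 1)
    (hν : ∀ i, ν i ≠ 0) (hdb : ν 0 * r = ν 1 * s)
    (hω : IsTransportPlan α μ ![![1 - r, r], ![s, 1 - s]] ν ω) (c : Fin m → Fin 2) :
    ∑ q, |∑ p with c p ≠ c q, μ p * α p q - μ q * ![r, s] (c q)| ≤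
      (1 + |1 - r - s|) * ∑ p, misplacedMass c ω p := by
  have eq_rev_iff : ∀ i j : Fin 2, i = j.rev ↔ i ≠ j := by decide
  have rate_eq : ∀ i : Fin 2, ![![1 - r, r], ![s, 1 - s]] i i.rev = ![r, s] i :=
    Fin.forall_fin_two.2 ⟨rfl, rfl⟩
  have h := hω.sum_abs_inflow_sub_timeReversal_le hα hα_row c (fun q ↦ (c q).rev)
    (δ := |1 - r - s|) fun q i ↦ by
      rw [timeReversal_twoPoint hν hdb]
      exact abs_twoPoint_sub_le r s i (c q) (c q).rev
  simpa only [timeReversal_twoPoint hν hdb, eq_rev_iff, rate_eq] using h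

end TwoPoints

/-- In the 4-point/2-point example, the deviation f from the optimal form
of the generalized detailed balance condition is bounded by 4(1 + |1 − r − s|) times the
cost of any transport plan from (4, α, μ) to (2, β, ν). -/
theorem stmt_12 (α : Fin 4 → Fin 4 → ℝ) (μ : Fin 4 → ℝ)
    (hA : IsClassicalSystem α μ)
    (r s : ℝ) (hr0 : 0 ≤ r) (hr1 : r ≤ 1) (hs0 : 0 ≤ s) (hs1 : s ≤ 1)
    (ν : Fin 2 → ℝ) (hν : ∀ i, 0 < ν i) (hνsum : ν 0 + ν 1 = 1)
    (hdb : ν 0 * r = ν 1 * s) :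
    ∀ ω, IsTransportPlan α μ (![![1 - r, r], ![s, 1 - s]]) ν ω →
      |μ 0 * α 0 1 + μ 2 * α 2 1 - μ 1 * s| +
        |μ 0 * α 0 3 + μ 2 * α 2 3 - μ 3 * s| +
        |μ 1 * α 1 0 + μ 3 * α 3 0 - μ 0 * r| +
        |μ 1 * α 1 2 + μ 3 * α 3 2 - μ 2 * r| ≤
      4 * (1 + |1 - r - s|) * (ω 1 0 + ω 3 0 + ω 0 1 + ω 2 1) := by
  intro ω hω
  let c : Fin 4 → Fin 2 := ![0, 1, 0, 1]
  have cost_eq : ∑ p, misplacedMass c ω p = ω 1 0 + ω 3 0 + ω 0 1 + ω 2 1 := by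
    simp only [c, misplacedMass, Finset.sum_filter, Fin.sum_univ_four, Fin.sum_univ_two,
      Matrix.cons_val, ne_eq, ite_not, ↓reduceIte, zero_ne_one, one_ne_zero, zero_add, add_zero]
    ring
  have cost_nonneg : 0 ≤ ∑ p, misplacedMass c ω p :=
    Finset.sum_nonneg fun p _ ↦ misplacedMass_nonneg hω.1.1 c p
  calc
    _ = ∑ q, |∑ p with c p ≠ c q, μ p * α p q - μ q * ![r, s] (c q)| := by
        simp only [c, Finset.sum_filter, Fin.sum_univ_four, Matrix.cons_val, ne_eq, ite_not,
          ↓reduceIte, zero_ne_one, one_ne_zero, zero_add, add_zero]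
        ring
    _ ≤ (1 + |1 - r - s|) * ∑ p, misplacedMass c ω p :=
        stmt_12_general hA.1 (fun p ↦ (hA.2.1 p).le) (fun i ↦ (hν i).ne') hdb hω c
    _ ≤ 4 * (1 + |1 - r - s|) * ∑ p, misplacedMass c ω p := by
        gcongr
        exact le_mul_of_one_le_left (by positivity) (by norm_num)
    _ = 4 * (1 + |1 - r - s|) * (ω 1 0 + ω 3 0 + ω 0 1 + ω 2 1) := by rw [cost_eq]
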